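/- arXiv:1901.09453 — 2 statements merged into one kernel-verified Lean document; each statement's English description precedes it below -/
import Mathlib

section
/- Let X and Z be measurable spaces, D_S and D_T probability measures on X, f_S, f_T : X → {0,1} measurable labeling functions, g_S, g_T : X → Z measurable transformations, and h : Z → {0,1} measurable. Let D_S^Z := (g_S)_*D_S, D_T^Z := (g_T)_*D_T, D_S^Y := (f_S)_*D_S, and D_T^Y := (f_T)_*D_T. If d_JS(D_S^Y, D_T^Y) ≥ d_JS(D_S^Z, D_T^Z), then ε_S(h∘g_S) + ε_T(h∘g_T) ≥ (1/2)·( d_JS(D_S^Y, D_T^Y) − d_JS(D_S^Z, D_T^Z) )², where ε_S(h∘g_S) := E_{x∼D_S}[|h(g_S(x)) − f_S(x)|] and ε_T(h∘g_T) := E_{x∼D_T}[|h(g_T(x)) − f_T(x)|]. -/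
open MeasureTheory
open scoped ENNReal

/-- The Kullback–Leibler divergence `KL(μ‖ν) = ∫ log(dμ/dν) dμ` (real-valued;
this is the correct value whenever `μ ≪ ν`, as is the case below where the
second argument is the midpoint measure). -/
noncomputable def klReal {Ω : Type*} [MeasurableSpace Ω] (μ ν : Measure Ω) : ℝ :=
  ∫ x, llr μ ν x ∂μ

/-- The Jensen–Shannon divergence
`D_JS(μ‖ν) := (1/2)·KL(μ‖m) + (1/2)·KL(ν‖m)` with `m := (μ + ν)/2`. -/
noncomputable def jsDiv {Ω : Type*} [MeasurableSpace Ω] (μ ν : Measure Ω) : ℝ :=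
  (1 / 2) * klReal μ ((2 : ℝ≥0∞)⁻¹ • (μ + ν)) + (1 / 2) * klReal ν ((2 : ℝ≥0∞)⁻¹ • (μ + ν))

/-- The Jensen–Shannon distance `d_JS(μ,ν) := √(D_JS(μ‖ν))`. -/
noncomputable def jsDist {Ω : Type*} [MeasurableSpace Ω] (μ ν : Measure Ω) : ℝ :=
  Real.sqrt (jsDiv μ ν)

theorem aux_jsq_triangle (a b c a' b' c' : ℝ) (ha : 0 ≤ a) (hb : 0 ≤ b) (hc : 0 ≤ c)
    (ha' : 0 ≤ a') (hb' : 0 ≤ b') (hc' : 0 ≤ c')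
    (h : √a ≤ √b + √c) (h' : √a' ≤ √b' + √c') : √(a + a') ≤ √(b + b') + √(c + c') := by
  have e := Real.sq_sqrt ha
  have e1 := Real.sq_sqrt hb
  have e2 := Real.sq_sqrt hc
  have e3 := Real.sq_sqrt ha'
  have e4 := Real.sq_sqrt hb'
  have e5 := Real.sq_sqrt hc'
  have f := Real.sqrt_nonneg a
  have f1 := Real.sqrt_nonneg b
  have f2 := Real.sqrt_nonneg c
  have f3 := Real.sqrt_nonneg a'
  have f4 := Real.sqrt_nonneg b'
  have f5 := Real.sqrt_nonneg c'
  have g : √b * √c + √b' * √c' ≤ √(b + b') * √(c + c') := by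
    rw [← Real.sqrt_mul (add_nonneg hb hb')]
    apply Real.le_sqrt_of_sq_le
    nlinarith [sq_nonneg (√b * √c' - √b' * √c)]
  apply Real.sqrt_le_iff.2 ⟨by positivity, ?_⟩
  have k1 := Real.sq_sqrt (add_nonneg hb hb')
  have k2 := Real.sq_sqrt (add_nonneg hc hc')
  have m1 : a ≤ (√b + √c)^2 := by rw [← e]; gcongr
  have m2 : a' ≤ (√b' + √c')^2 := by rw [← e3]; gcongr
  nlinarith

/-- scalar JS -/
noncomputable def auxL (x y : ℝ) : ℝ :=
  x * Real.log (2 * x / (x + y)) + y * Real.log (2 * y / (x + y))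

theorem auxL_comm (x y : ℝ) : auxL x y = auxL y x := by
  unfold auxL; rw [add_comm x y]; ring

theorem auxL_le {x y : ℝ} (hx : 0 ≤ x) (hy : 0 ≤ y) : auxL x y ≤ |x - y| := by
  wlog hxy : x ≤ y generalizing x y
  · rw [auxL_comm, abs_sub_comm]; exact this hy hx (le_of_not_ge hxy)
  rw [abs_sub_comm, abs_of_nonneg (by linarith)]
  unfold auxL
  rcases eq_or_lt_of_le hy with rfl | hy
  · have : x = 0 := by linarith
    simp [this]
  have h1 : Real.log (2 * x / (x + y)) ≤ 0 :=
    Real.log_nonpos (by positivity) (by rw [div_le_one (by positivity)]; linarith)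
  have h2 : Real.log (2 * y / (x + y)) ≤ 2 * y / (x + y) - 1 :=
    Real.log_le_sub_one_of_pos (by positivity)
  have h3 : y * (2 * y / (x + y) - 1) ≤ y - x := by
    rw [div_sub_one (by positivity), ← mul_div_assoc, div_le_iff₀ (by positivity)]
    nlinarith
  nlinarith

theorem auxL_eq {x y : ℝ} (hx : 0 ≤ x) (hy : 0 ≤ y) :
    auxL x y = x * Real.log (2 * x) + y * Real.log (2 * y) - (x + y) * Real.log (x + y) := by
  unfold auxL
  rcases eq_or_lt_of_le hx with rfl | hx
  · rcases eq_or_lt_of_le hy with rfl | hy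
    · simp
    · rw [Real.log_div (x := 2 * y) (by positivity) (by positivity)]; ring
  rcases eq_or_lt_of_le hy with rfl | hy
  · rw [Real.log_div (x := 2 * x) (by positivity) (by positivity)]; ring
  rw [Real.log_div (by positivity) (by positivity), Real.log_div (by positivity) (by positivity)]; ring

theorem aux_exp_int {s : ℝ} (hs : 0 < s) :
    ∫⁻ u in Set.Ioi (0:ℝ), ENNReal.ofReal (Real.exp (-u * s)) = ENNReal.ofReal (s⁻¹) := by
  rw [← ofReal_integral_eq_lintegral_ofReal]
  · congr 1
    have := integral_exp_mul_Ioi (a := -s) (by linarith) 0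
    simp only [mul_zero, Real.exp_zero] at this
    rw [neg_div_neg_eq, one_div] at this
    rw [← this]
    congr 1; ext u; congr 1; ring
  · have := exp_neg_integrableOn_Ioi 0 hs
    refine this.congr_fun (fun u _ => ?_) measurableSet_Ioi
    simp only; congr 1; ring
  · filter_upwards with u using (Real.exp_pos _).le

theorem aux_kernel {x y s : ℝ} (hx : 0 ≤ x) (hxy : x ≤ y) (hs : 0 < s) :
    ∫⁻ t in Set.Ioc x y, ENNReal.ofReal ((s + t)⁻¹)
      = ENNReal.ofReal (Real.log (s + y) - Real.log (s + x)) := by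
  have hI : IntervalIntegrable (fun t => (s + t)⁻¹) volume x y := by
    apply ContinuousOn.intervalIntegrable
    rw [Set.uIcc_of_le hxy]
    apply ContinuousOn.inv₀ (by fun_prop)
    intro t ht
    have h0 : 0 < s + t := by linarith [ht.1]
    exact h0.ne'
  rw [← ofReal_integral_eq_lintegral_ofReal]
  · rw [← intervalIntegral.integral_of_le hxy,
      intervalIntegral.integral_comp_add_left (fun t => t⁻¹) s, integral_inv_of_pos (by linarith) (by linarith),
      Real.log_div (by linarith) (by linarith)]
  · rw [intervalIntegrable_iff_integrableOn_Ioc_of_le hxy] at hI; exact hI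
  · filter_upwards [ae_restrict_mem measurableSet_Ioc] with t ht
    have := ht.1; simp only [Pi.zero_apply]; rw [inv_nonneg]; linarith

theorem aux_kernel2 {x y : ℝ} (hx : 0 ≤ x) (hxy : x ≤ y) :
    ∫⁻ s in Set.Ioc x y, ENNReal.ofReal (Real.log (s + y) - Real.log (s + x))
      = ENNReal.ofReal (2 * auxL x y) := by
  have hI1 : IntervalIntegrable (fun t => Real.log (t + y)) volume x y := by
    have := (intervalIntegral.intervalIntegrable_log' (a := x + y) (b := y + y)).comp_add_right y
    simpa using this
  have hI2 : IntervalIntegrable (fun t => Real.log (t + x)) volume x y := by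
    have := (intervalIntegral.intervalIntegrable_log' (a := x + x) (b := y + x)).comp_add_right x
    simpa using this
  rw [← ofReal_integral_eq_lintegral_ofReal]
  · rw [← intervalIntegral.integral_of_le hxy, intervalIntegral.integral_sub hI1 hI2,
      intervalIntegral.integral_comp_add_right (fun t => Real.log t),
      intervalIntegral.integral_comp_add_right (fun t => Real.log t), integral_log, integral_log,
      auxL_eq hx (hx.trans hxy)]
    congr 1
    rw [add_comm y x, two_mul x, two_mul y]; ring
  · have := hI1.sub hI2
    rw [intervalIntegrable_iff_integrableOn_Ioc_of_le hxy] at this; exact this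
  · filter_upwards [ae_restrict_mem measurableSet_Ioc] with t ht
    have := ht.1
    simp only [Pi.zero_apply, sub_nonneg]
    exact Real.log_le_log (by linarith) (by linarith)

noncomputable def auxPhi (x y u : ℝ) : ℝ := (Real.exp (-u * x) - Real.exp (-u * y)) / u

theorem aux_phi_int {x y u : ℝ} (hxy : x ≤ y) (hu : 0 < u) :
    ENNReal.ofReal (auxPhi x y u) = ∫⁻ s in Set.Ioc x y, ENNReal.ofReal (Real.exp (-u * s)) := by
  have hI : IntervalIntegrable (fun s => Real.exp (-u * s)) volume x y := by
    apply Continuous.intervalIntegrable; fun_prop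
  rw [← ofReal_integral_eq_lintegral_ofReal]
  · rw [← intervalIntegral.integral_of_le hxy,
      intervalIntegral.integral_comp_mul_left (fun t => Real.exp t) (by linarith), integral_exp]
    congr 1
    unfold auxPhi
    simp only [smul_eq_mul]
    field_simp
    ring
  · rw [intervalIntegrable_iff_integrableOn_Ioc_of_le hxy] at hI; exact hI
  · filter_upwards with u using (Real.exp_pos _).le

theorem aux_phi_nonneg {x y u : ℝ} (hxy : x ≤ y) (hu : 0 < u) : 0 ≤ auxPhi x y u := by
  unfold auxPhi
  apply div_nonneg _ hu.le
  rw [sub_nonneg]; apply Real.exp_le_exp.2; nlinarith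

theorem aux_phi_sq {x y : ℝ} (hx : 0 ≤ x) (hxy : x ≤ y) :
    ∫⁻ u in Set.Ioi (0:ℝ), ENNReal.ofReal ((auxPhi x y u) ^ 2) = ENNReal.ofReal (2 * auxL x y) := by
  calc _ = ∫⁻ u in Set.Ioi (0:ℝ), ∫⁻ s in Set.Ioc x y, ∫⁻ t in Set.Ioc x y,
          ENNReal.ofReal (Real.exp (-u * (s + t))) := by
        apply setLIntegral_congr_fun measurableSet_Ioi
        intro u hu
        have hu : 0 < u := hu
        simp only
        rw [ENNReal.ofReal_pow (aux_phi_nonneg hxy hu), aux_phi_int hxy hu, sq,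
          ← lintegral_mul_const _ (by fun_prop)]
        congr 1; ext s
        rw [← lintegral_const_mul _ (by fun_prop)]
        congr 1; ext t
        rw [← ENNReal.ofReal_mul (Real.exp_pos _).le, ← Real.exp_add, mul_add]
    _ = ∫⁻ s in Set.Ioc x y, ∫⁻ t in Set.Ioc x y, ∫⁻ u in Set.Ioi (0:ℝ), 
          ENNReal.ofReal (Real.exp (-u * (s + t))) := by
        rw [lintegral_lintegral_swap]
        · congr 1; ext s
          rw [lintegral_lintegral_swap]
          apply Measurable.aemeasurable
          fun_prop
        · apply Measurable.aemeasurable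
          apply Measurable.lintegral_prod_right'
            (f := fun p : (ℝ × ℝ) × ℝ => ENNReal.ofReal (Real.exp (-p.1.1 * (p.1.2 + p.2))))
          fun_prop
    _ = ∫⁻ s in Set.Ioc x y, ∫⁻ t in Set.Ioc x y, ENNReal.ofReal ((s + t)⁻¹) := by
        apply setLIntegral_congr_fun measurableSet_Ioc
        intro s hs
        apply setLIntegral_congr_fun measurableSet_Ioc
        intro t ht
        exact aux_exp_int (by linarith [hs.1, ht.1])
    _ = ∫⁻ s in Set.Ioc x y, ENNReal.ofReal (Real.log (s + y) - Real.log (s + x)) := by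
        apply setLIntegral_congr_fun measurableSet_Ioc
        intro s hs
        exact aux_kernel hx hxy (by linarith [hs.1])
    _ = _ := aux_kernel2 hx hxy

theorem aux_phi_sq' {x y : ℝ} (hx : 0 ≤ x) (hy : 0 ≤ y) :
    ∫⁻ u in Set.Ioi (0:ℝ), ENNReal.ofReal ((auxPhi x y u) ^ 2) = ENNReal.ofReal (2 * auxL x y) := by
  rcases le_total x y with h | h
  · exact aux_phi_sq hx h
  · rw [auxL_comm, ← aux_phi_sq hy h]
    congr 1; ext u; congr 1; unfold auxPhi; ring

theorem auxL_nonneg {x y : ℝ} (hx : 0 ≤ x) (hy : 0 ≤ y) : 0 ≤ auxL x y := by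
  wlog hxy : x ≤ y generalizing x y
  · rw [auxL_comm]; exact this hy hx (le_of_not_ge hxy)
  unfold auxL
  have key : ∀ a b : ℝ, 0 ≤ a → 0 ≤ b → a - (a + b) / 2 ≤ a * Real.log (2 * a / (a + b)) := by
    intro a b ha hb
    rcases eq_or_lt_of_le ha with rfl | ha
    · simp; linarith
    have := Real.one_sub_inv_le_log_of_pos (x := 2 * a / (a + b)) (by positivity)
    calc a - (a + b) / 2 = a * (1 - (2 * a / (a + b))⁻¹) := by field_simp
      _ ≤ _ := by gcongr
  have h1 := key x y hx hy
  have h2 := key y x hy hx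
  rw [add_comm y x] at h2
  linarith

theorem aux_norm {x y : ℝ} (hx : 0 ≤ x) (hy : 0 ≤ y) :
    eLpNorm (auxPhi x y) 2 (volume.restrict (Set.Ioi (0:ℝ))) = ENNReal.ofReal (√2 * √(auxL x y)) := by
  rw [eLpNorm_eq_lintegral_rpow_enorm_toReal (by norm_num) (by norm_num)]
  have : ∀ u, ‖auxPhi x y u‖ₑ ^ (2 : ℝ≥0∞).toReal = ENNReal.ofReal ((auxPhi x y u)^2) := by
    intro u
    rw [← sq_abs, ENNReal.ofReal_pow (abs_nonneg _), ← Real.enorm_eq_ofReal_abs]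
    simp
  simp only [this]
  rw [aux_phi_sq' hx hy, ENNReal.ofReal_rpow_of_nonneg (by have := auxL_nonneg hx hy; positivity) (by simp),
    ← Real.sqrt_mul (by norm_num), Real.sqrt_eq_rpow]
  simp

theorem auxL_triangle {x y z : ℝ} (hx : 0 ≤ x) (hy : 0 ≤ y) (hz : 0 ≤ z) :
    √(auxL x z) ≤ √(auxL x y) + √(auxL y z) := by
  have hm : ∀ a b, AEStronglyMeasurable (auxPhi a b) (volume.restrict (Set.Ioi (0:ℝ))) := by
    intro a b
    apply Measurable.aestronglyMeasurable
    unfold auxPhi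
    fun_prop
  have := eLpNorm_add_le (hm x y) (hm y z) (p := 2) (by norm_num)
  have e : auxPhi x y + auxPhi y z = auxPhi x z := by
    ext u; simp only [Pi.add_apply, auxPhi]; ring
  rw [e, aux_norm hx hy, aux_norm hx hz, aux_norm hy hz,
    ← ENNReal.ofReal_add (by positivity) (by positivity),
    ENNReal.ofReal_le_ofReal_iff (by positivity), ← mul_add] at this
  exact le_of_mul_le_mul_left this (by positivity)

section measurepart

variable {Ω : Type*} [MeasurableSpace Ω]

theorem aux_mid_ac (μ ν : Measure Ω) : μ ≪ (2 : ℝ≥0∞)⁻¹ • (μ + ν) := by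
  have h1 : μ ≪ μ + ν := Measure.AbsolutelyContinuous.rfl.add_right ν
  exact h1.trans (Measure.absolutelyContinuous_smul (by simp))

theorem aux_mid_prob (μ ν : Measure Ω) [IsProbabilityMeasure μ] [IsProbabilityMeasure ν] :
    IsProbabilityMeasure ((2 : ℝ≥0∞)⁻¹ • (μ + ν)) := by
  constructor
  simp only [Measure.smul_apply, Measure.add_apply, measure_univ, smul_eq_mul]
  rw [one_add_one_eq_two]
  exact ENNReal.inv_mul_cancel (by simp) (by simp)

theorem aux_rnDeriv_le (μ ν : Measure Ω) [IsProbabilityMeasure μ] [IsProbabilityMeasure ν] :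
    ∀ᵐ x ∂((2 : ℝ≥0∞)⁻¹ • (μ + ν)), μ.rnDeriv ((2 : ℝ≥0∞)⁻¹ • (μ + ν)) x ≤ 2 := by
  have := aux_mid_prob μ ν
  set m := (2 : ℝ≥0∞)⁻¹ • (μ + ν) with hm
  apply ae_le_of_forall_setLIntegral_le_of_sigmaFinite (Measure.measurable_rnDeriv _ _)
  intro s hs _
  refine (Measure.setLIntegral_rnDeriv_le s).trans ?_
  simp only [lintegral_const, Measure.restrict_apply_univ]
  rw [hm, Measure.smul_apply, smul_eq_mul, ← mul_assoc, ENNReal.mul_inv_cancel (by simp) (by simp), one_mul]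
  simp

theorem aux_integrable_llr (μ ν : Measure Ω) [IsProbabilityMeasure μ] [IsProbabilityMeasure ν] :
    Integrable (llr μ ((2 : ℝ≥0∞)⁻¹ • (μ + ν))) μ := by
  have := aux_mid_prob μ ν
  rw [← InformationTheory.integrable_klFun_rnDeriv_iff (aux_mid_ac μ ν)]
  obtain ⟨C, hC⟩ := (isCompact_Icc (a := (0:ℝ)) (b := 2)).exists_bound_of_continuousOn
    InformationTheory.continuous_klFun.continuousOn
  apply Integrable.of_bound (C := C)
  · apply Measurable.aestronglyMeasurable
    exact InformationTheory.measurable_klFun.comp (Measure.measurable_rnDeriv _ _).ennreal_toReal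
  · filter_upwards [aux_rnDeriv_le μ ν] with x hx
    apply hC
    refine ⟨ENNReal.toReal_nonneg, ?_⟩
    have := ENNReal.toReal_mono (by simp) hx
    simpa using this

theorem aux_klReal_eq (μ ν : Measure Ω) [IsProbabilityMeasure μ] [IsProbabilityMeasure ν] :
    klReal μ ((2 : ℝ≥0∞)⁻¹ • (μ + ν)) =
      (InformationTheory.klDiv μ ((2 : ℝ≥0∞)⁻¹ • (μ + ν))).toReal := by
  have := aux_mid_prob μ ν
  rw [InformationTheory.toReal_klDiv_of_measure_eq (aux_mid_ac μ ν) (by simp only [measure_univ])]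
  rfl

theorem aux_klReal_map_le {Ω' : Type*} [MeasurableSpace Ω'] (μ ν : Measure Ω)
    [IsProbabilityMeasure μ] [IsProbabilityMeasure ν]
    (h : Ω → Ω') (hh : Measurable h) :
    klReal (μ.map h) ((2 : ℝ≥0∞)⁻¹ • (μ.map h + ν.map h)) ≤ klReal μ ((2 : ℝ≥0∞)⁻¹ • (μ + ν)) := by
  have := aux_mid_prob μ ν
  have := Measure.isProbabilityMeasure_map (μ := μ) hh.aemeasurable
  have := Measure.isProbabilityMeasure_map (μ := ν) hh.aemeasurable
  rw [aux_klReal_eq, aux_klReal_eq]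
  apply ENNReal.toReal_mono
  · exact InformationTheory.klDiv_ne_top (aux_mid_ac μ ν) (aux_integrable_llr μ ν)
  · have e : (2 : ℝ≥0∞)⁻¹ • (μ.map h + ν.map h) = ((2 : ℝ≥0∞)⁻¹ • (μ + ν)).map h := by
      rw [Measure.map_smul, Measure.map_add _ _ hh]
    rw [e]
    exact InformationTheory.klDiv_map_le _ _ hh

theorem aux_jsDiv_map_le {Ω' : Type*} [MeasurableSpace Ω'] (μ ν : Measure Ω)
    [IsProbabilityMeasure μ] [IsProbabilityMeasure ν]
    (h : Ω → Ω') (hh : Measurable h) : jsDiv (μ.map h) (ν.map h) ≤ jsDiv μ ν := by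
  unfold jsDiv
  have h1 := aux_klReal_map_le μ ν h hh
  have h2 := aux_klReal_map_le ν μ h hh
  rw [add_comm ν μ, add_comm (ν.map h)] at h2
  linarith

theorem aux_rnDeriv_point (μ m : Measure ℝ) [IsFiniteMeasure μ] [IsFiniteMeasure m] (hac : μ ≪ m)
    (i : ℝ) : μ.real {i} * llr μ m i = μ.real {i} * Real.log (μ.real {i} / m.real {i}) := by
  by_cases h0 : μ.real {i} = 0
  · simp [h0]
  have hm0 : m.real {i} ≠ 0 := by
    intro hc
    apply h0
    rw [measureReal_eq_zero_iff] at hc ⊢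
    exact hac hc
  have := Measure.setLIntegral_rnDeriv hac {i}
  rw [lintegral_singleton] at this
  have e : (μ.rnDeriv m i).toReal * m.real {i} = μ.real {i} := by
    rw [measureReal_def, measureReal_def, ← this, ENNReal.toReal_mul]
  rw [llr, ← e, mul_div_assoc, div_self hm0, mul_one]

theorem aux_klReal_two (μ m : Measure ℝ) [IsFiniteMeasure μ] [IsFiniteMeasure m] (hac : μ ≪ m)
    (hsupp : ∀ᵐ x ∂μ, x = 0 ∨ x = 1) :
    klReal μ m = μ.real {0} * Real.log (μ.real {0} / m.real {0})
      + μ.real {1} * Real.log (μ.real {1} / m.real {1}) := by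
  unfold klReal
  have hr : μ.restrict ({0, 1} : Set ℝ) = μ := by
    rw [Measure.restrict_eq_self_of_ae_mem]
    filter_upwards [hsupp] with x hx
    simpa using hx
  have : ∫ x, llr μ m x ∂μ = ∫ x in ({0, 1} : Finset ℝ), llr μ m x ∂μ := by
    simp only [Finset.coe_insert, Finset.coe_singleton, hr]
  rw [this, setIntegral_finset]
  · rw [Finset.sum_pair (by norm_num)]
    simp only [smul_eq_mul]
    rw [aux_rnDeriv_point μ m hac, aux_rnDeriv_point μ m hac]
  · exact IntegrableOn.finset

theorem aux_jsDiv_two (μ ν : Measure ℝ) [IsProbabilityMeasure μ] [IsProbabilityMeasure ν]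
    (hμ : ∀ᵐ x ∂μ, x = 0 ∨ x = 1) (hν : ∀ᵐ x ∂ν, x = 0 ∨ x = 1) :
    jsDiv μ ν = (1 / 2) * (auxL (μ.real {0}) (ν.real {0}) + auxL (μ.real {1}) (ν.real {1})) := by
  have := aux_mid_prob μ ν
  unfold jsDiv
  have hac : ν ≪ (2 : ℝ≥0∞)⁻¹ • (μ + ν) := by rw [add_comm]; exact aux_mid_ac ν μ
  rw [aux_klReal_two μ _ (aux_mid_ac μ ν) hμ, aux_klReal_two ν _ hac hν]
  have e : ∀ i, ((2 : ℝ≥0∞)⁻¹ • (μ + ν)).real {i} = (μ.real {i} + ν.real {i}) / 2 := by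
    intro i
    rw [measureReal_ennreal_smul_apply, measureReal_add_apply]
    simp; ring
  have e2 : ∀ a b : ℝ, a / (b / 2) = 2 * a / b := by
    intro a b; rw [div_div_eq_mul_div, mul_comm]
  simp only [e, e2, auxL]
  ring

end measurepart

/-- binary JS distance -/
noncomputable def auxD (p q : ℝ) : ℝ := √((1 / 2) * (auxL (1 - p) (1 - q) + auxL p q))

theorem auxD_triangle {p q r : ℝ} (hp : 0 ≤ p) (hp1 : p ≤ 1) (hq : 0 ≤ q) (hq1 : q ≤ 1)
    (hr : 0 ≤ r) (hr1 : r ≤ 1) : auxD p r ≤ auxD p q + auxD q r := by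
  unfold auxD
  rw [Real.sqrt_mul (by norm_num), Real.sqrt_mul (by norm_num), Real.sqrt_mul (by norm_num), ← mul_add]
  apply mul_le_mul_of_nonneg_left _ (Real.sqrt_nonneg _)
  have hp' : 0 ≤ 1 - p := by linarith
  have hq' : 0 ≤ 1 - q := by linarith
  have hr' : 0 ≤ 1 - r := by linarith
  exact aux_jsq_triangle _ _ _ _ _ _ (auxL_nonneg hp' hr') (auxL_nonneg hp' hq') (auxL_nonneg hq' hr')
    (auxL_nonneg hp hr) (auxL_nonneg hp hq) (auxL_nonneg hq hr)
    (auxL_triangle hp' hq' hr') (auxL_triangle hp hq hr)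

theorem auxD_le {p q : ℝ} (hp : 0 ≤ p) (hp1 : p ≤ 1) (hq : 0 ≤ q) (hq1 : q ≤ 1) :
    auxD p q ≤ √|p - q| := by
  apply Real.sqrt_le_sqrt
  have h1 := auxL_le hp hq
  have h2 := auxL_le (x := 1 - p) (y := 1 - q) (by linarith) (by linarith)
  have : |1 - p - (1 - q)| = |p - q| := by rw [abs_sub_comm p q]; congr 1; ring
  linarith

theorem aux_integral_indicator {X : Type*} [MeasurableSpace X] (D : Measure X) [IsProbabilityMeasure D]
    (f : X → ℝ) (hf : Measurable f) (hr : ∀ x, f x = 0 ∨ f x = 1) :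
    Integrable f D ∧ ∫ x, f x ∂D = (D.map f).real {1} ∧ (D.map f).real {0} = 1 - ∫ x, f x ∂D := by
  have hm : MeasurableSet (f ⁻¹' {1}) := hf (measurableSet_singleton 1)
  have e : f = (f ⁻¹' {1}).indicator 1 := by
    ext x
    rcases hr x with h | h <;> simp [Set.indicator, h]
  have e1 : ∫ x, f x ∂D = (D.map f).real {1} := by
    rw [map_measureReal_apply hf (measurableSet_singleton 1)]
    conv_lhs => rw [e]
    exact integral_indicator_one hm
  refine ⟨?_, e1, ?_⟩
  · apply Integrable.of_bound hf.aestronglyMeasurable (C := 1)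
    filter_upwards with x
    rcases hr x with h | h <;> simp [h]
  · rw [e1, map_measureReal_apply hf (measurableSet_singleton 1),
      map_measureReal_apply hf (measurableSet_singleton 0), ← probReal_compl_eq_one_sub hm]
    congr 1
    ext x
    rcases hr x with h | h <;> simp [h]

theorem aux_jsDist_map {X : Type*} [MeasurableSpace X] (DS DT : Measure X)
    [IsProbabilityMeasure DS] [IsProbabilityMeasure DT]
    (f g : X → ℝ) (hf : Measurable f) (hg : Measurable g)
    (hfr : ∀ x, f x = 0 ∨ f x = 1) (hgr : ∀ x, g x = 0 ∨ g x = 1) :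
    jsDist (DS.map f) (DT.map g) = auxD (∫ x, f x ∂DS) (∫ x, g x ∂DT) := by
  have := Measure.isProbabilityMeasure_map (μ := DS) hf.aemeasurable
  have := Measure.isProbabilityMeasure_map (μ := DT) hg.aemeasurable
  obtain ⟨-, a1, a2⟩ := aux_integral_indicator DS f hf hfr
  obtain ⟨-, b1, b2⟩ := aux_integral_indicator DT g hg hgr
  have hs : MeasurableSet {x : ℝ | x = 0 ∨ x = 1} := by
    have : {x : ℝ | x = 0 ∨ x = 1} = {0, 1} := rfl
    rw [this]; measurability
  unfold jsDist auxD
  rw [aux_jsDiv_two, a2, b2, ← a1, ← b1]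
  · rw [ae_map_iff hf.aemeasurable hs]; exact Filter.Eventually.of_forall hfr
  · rw [ae_map_iff hg.aemeasurable hs]; exact Filter.Eventually.of_forall hgr

theorem aux_bounds {X : Type*} [MeasurableSpace X] (D : Measure X) [IsProbabilityMeasure D]
    (f : X → ℝ) (hf : Measurable f) (hr : ∀ x, f x = 0 ∨ f x = 1) :
    0 ≤ ∫ x, f x ∂D ∧ ∫ x, f x ∂D ≤ 1 := by
  have := Measure.isProbabilityMeasure_map (μ := D) hf.aemeasurable
  rw [(aux_integral_indicator D f hf hr).2.1]
  exact ⟨measureReal_nonneg, measureReal_le_one⟩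

theorem aux_err {X : Type*} [MeasurableSpace X] (D : Measure X) [IsProbabilityMeasure D]
    (f g : X → ℝ) (hf : Measurable f) (hr : ∀ x, f x = 0 ∨ f x = 1)
    (hg : Measurable g) (hgr : ∀ x, g x = 0 ∨ g x = 1) :
    |∫ x, g x ∂D - ∫ x, f x ∂D| ≤ ∫ x, |g x - f x| ∂D := by
  rw [← integral_sub (aux_integral_indicator D g hg hgr).1 (aux_integral_indicator D f hf hr).1]
  exact abs_integral_le_integral_abs

theorem stmt_11 {X Z : Type*} [MeasurableSpace X] [MeasurableSpace Z]
    (DS DT : Measure X) [IsProbabilityMeasure DS] [IsProbabilityMeasure DT]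
    (fS fT : X → ℝ) (hfS : Measurable fS) (hfT : Measurable fT)
    (hfSr : ∀ x, fS x = 0 ∨ fS x = 1) (hfTr : ∀ x, fT x = 0 ∨ fT x = 1)
    (gS gT : X → Z) (hgS : Measurable gS) (hgT : Measurable gT)
    (h : Z → ℝ) (hh : Measurable h) (hhr : ∀ z, h z = 0 ∨ h z = 1)
    (hge : jsDist (Measure.map gS DS) (Measure.map gT DT) ≤
      jsDist (Measure.map fS DS) (Measure.map fT DT)) :
    (1 / 2) * (jsDist (Measure.map fS DS) (Measure.map fT DT) -
        jsDist (Measure.map gS DS) (Measure.map gT DT)) ^ 2 ≤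
      (∫ x, |h (gS x) - fS x| ∂DS) + ∫ x, |h (gT x) - fT x| ∂DT := by
  have mS := Measure.isProbabilityMeasure_map (μ := DS) hgS.aemeasurable
  have mT := Measure.isProbabilityMeasure_map (μ := DT) hgT.aemeasurable
  have hS : Measurable (fun x => h (gS x)) := hh.comp hgS
  have hT : Measurable (fun x => h (gT x)) := hh.comp hgT
  have hZ : auxD (∫ x, h (gS x) ∂DS) (∫ x, h (gT x) ∂DT) ≤
      jsDist (Measure.map gS DS) (Measure.map gT DT) := by
    rw [← aux_jsDist_map DS DT _ _ hS hT (fun x => hhr _) (fun x => hhr _)]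
    have := aux_jsDiv_map_le (Measure.map gS DS) (Measure.map gT DT) h hh
    rw [Measure.map_map hh hgS, Measure.map_map hh hgT] at this
    exact Real.sqrt_le_sqrt this
  have hY := aux_jsDist_map DS DT _ _ hfS hfT hfSr hfTr
  have eS := aux_err DS fS _ hfS hfSr hS (fun x => hhr _)
  have eT := aux_err DT fT _ hfT hfTr hT (fun x => hhr _)
  obtain ⟨p0, p1⟩ := aux_bounds DS fS hfS hfSr
  obtain ⟨q0, q1⟩ := aux_bounds DT fT hfT hfTr
  obtain ⟨a0, a1⟩ := aux_bounds DS _ hS (fun x => hhr _)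
  obtain ⟨b0, b1⟩ := aux_bounds DT _ hT (fun x => hhr _)
  have t1 := auxD_triangle p0 p1 a0 a1 q0 q1
  have t2 := auxD_triangle a0 a1 b0 b1 q0 q1
  have l1 := auxD_le p0 p1 a0 a1
  have l2 := auxD_le b0 b1 q0 q1
  rw [abs_sub_comm] at l1
  have l3 := l1.trans (Real.sqrt_le_sqrt eS)
  have l4 := l2.trans (Real.sqrt_le_sqrt eT)
  rw [← hY] at t1
  have s1 := Real.sq_sqrt ((abs_nonneg _).trans eS)
  have s2 := Real.sq_sqrt ((abs_nonneg _).trans eT)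
  set d := jsDist (Measure.map fS DS) (Measure.map fT DT) -
        jsDist (Measure.map gS DS) (Measure.map gT DT) with hd
  have d0 : 0 ≤ d := sub_nonneg.2 hge
  have d1 : d ≤ √(∫ x, |h (gS x) - fS x| ∂DS) + √(∫ x, |h (gT x) - fT x| ∂DT) := by linarith
  have d2 := pow_le_pow_left₀ d0 d1 2
  nlinarith [sq_nonneg (√(∫ x, |h (gS x) - fS x| ∂DS) - √(∫ x, |h (gT x) - fT x| ∂DT))]
end

section
/- Let X be a measurable space, D a probability measure on X, and H̃ a countable nonempty set of measurable functions from X to {0,1}. Fix n ≥ 1 and δ ∈ (0,1). Then with probability at least 1 − δ over an i.i.d. sample S = (x_1, …, x_n) ∼ D^n: d_{H̃}(D, D̂) ≤ 2·Rad_S(H̃) + 3·√(log(2/δ)/(2n)), where D̂ is the empirical distribution of S (the uniform measure on the sample points). -/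
open MeasureTheory Set
open scoped ENNReal

/-- The empirical Rademacher complexity of the class `H` w.r.t. the sample `x`:
the expectation, over i.i.d. uniform signs `σ ∈ {−1,+1}^n`, of
`sup_{h ∈ H} (1/n) ∑ i σ_i h(x_i)`.  The expectation is written as the average
over all `2^n` sign vectors (encoded as `Fin n → Bool`). -/
noncomputable def radS {X : Type*} {n : ℕ} (x : Fin n → X) (H : Set (X → ℝ)) : ℝ :=
  (∑ σ : Fin n → Bool,
    sSup ((fun h => (1 / (n : ℝ)) * ∑ i, (if σ i then (1 : ℝ) else -1) * h (x i)) '' H))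
    / 2 ^ n

/-- The H-divergence induced by a class `H` of `{0,1}`-valued functions:
`d_H(P,Q) := sup_{h ∈ H} |P({x : h(x) = 1}) − Q({x : h(x) = 1})|`. -/
noncomputable def dH {X : Type*} [MeasurableSpace X] (H : Set (X → ℝ))
    (P Q : Measure X) : ℝ :=
  sSup ((fun h => |(P {x | h x = 1}).toReal - (Q {x | h x = 1}).toReal|) '' H)

/-- The empirical distribution of the sample `ω = (x_1, …, x_n)`: the uniform
measure on the sample points. -/
noncomputable def empD {X : Type*} [MeasurableSpace X] {n : ℕ} (ω : Fin n → X) : Measure X :=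
  ((n : ℝ≥0∞))⁻¹ • ∑ i, Measure.dirac (ω i)

lemma hoeff_aux {X : Type*} [MeasurableSpace X] (D : Measure X) [IsProbabilityMeasure D]
    (c : ℝ) (g : X → ℝ) (hg : Measurable g) (B : ℝ) (hB : ∀ x, |g x| ≤ B)
    (hc : ∀ x y, g x - g y ≤ c) (t : ℝ) :
    ∫ x, Real.exp (t * g x) ∂D ≤ Real.exp (t * ∫ x, g x ∂D + c ^ 2 * t ^ 2 / 8) := by
  obtain ⟨x0⟩ : Nonempty X := D.nonempty_of_neZero
  have hbdd : BddBelow (range g) := ⟨-B, by rintro _ ⟨x, rfl⟩; exact (abs_le.1 (hB x)).1⟩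
  have : Nonempty X := ⟨x0⟩
  have hmem : ∀ x, g x ∈ Icc (⨅ y, g y) ((⨅ y, g y) + c) := by
    intro x
    refine ⟨ciInf_le hbdd x, ?_⟩
    have : g x - c ≤ ⨅ y, g y := le_ciInf fun y => by linarith [hc x y]
    linarith
  have h := (ProbabilityTheory.hasSubgaussianMGF_of_mem_Icc (μ := D) hg.aemeasurable
    (Filter.Eventually.of_forall hmem)).mgf_le t
  have e : ∫ x, Real.exp (t * g x) ∂D = Real.exp (t * ∫ x, g x ∂D) *
      ProbabilityTheory.mgf (fun x => g x - ∫ x, g x ∂D) D t := by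
    rw [ProbabilityTheory.mgf, ← integral_const_mul]
    congr 1; ext x; rw [← Real.exp_add]; congr 1; ring
  rw [e, Real.exp_add]
  gcongr
  refine h.trans (le_of_eq ?_)
  congr 1
  simp [div_pow, sq_abs]
  ring

lemma int_bdd {Ω : Type*} [MeasurableSpace Ω] (μ : Measure Ω) [IsFiniteMeasure μ] {f : Ω → ℝ}
    (hf : Measurable f) (B : ℝ) (hB : ∀ x, |f x| ≤ B) : Integrable f μ :=
  Integrable.of_bound hf.aestronglyMeasurable B (Filter.Eventually.of_forall hB)

lemma int_exp_bdd {Ω : Type*} [MeasurableSpace Ω] (μ : Measure Ω) [IsFiniteMeasure μ] {f : Ω → ℝ}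
    (hf : Measurable f) (B : ℝ) (hB : ∀ x, |f x| ≤ B) (t : ℝ) :
    Integrable (fun x => Real.exp (t * f x)) μ := by
  refine int_bdd μ (by fun_prop) (Real.exp (|t| * B)) fun x => ?_
  rw [Real.abs_exp]
  refine Real.exp_le_exp.2 ?_
  calc t * f x ≤ |t * f x| := le_abs_self _
    _ = |t| * |f x| := abs_mul _ _
    _ ≤ _ := by gcongr; exact hB x

lemma mcd_mgf {X : Type*} [MeasurableSpace X] (D : Measure X) [IsProbabilityMeasure D]
    (c B t : ℝ) (n : ℕ) : ∀ (f : (Fin n → X) → ℝ), Measurable f → (∀ ω, |f ω| ≤ B) →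
    (∀ (i : Fin n) (ω ω' : Fin n → X), (∀ j, j ≠ i → ω j = ω' j) → f ω - f ω' ≤ c) →
    ∫ ω, Real.exp (t * f ω) ∂(Measure.pi fun _ : Fin n => D) ≤
      Real.exp (t * ∫ ω, f ω ∂(Measure.pi fun _ : Fin n => D) + n * (c ^ 2 * t ^ 2 / 8)) := by
  induction n with
  | zero =>
    intro f hf hB hc
    have : f = fun _ => f (fun i => i.elim0) := by
      ext ω; congr 1; ext i; exact i.elim0
    rw [this]; simp
  | succ n ih =>
    intro f hf hB hc
    have hmp := (measurePreserving_piFinSuccAbove (fun _ : Fin (n+1) => D) 0).symm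
    have key : ∀ F : (Fin (n+1) → X) → ℝ,
        ∫ ω, F ω ∂(Measure.pi fun _ : Fin (n+1) => D) =
        ∫ z : X × (Fin n → X), F (Fin.cons z.1 z.2) ∂(D.prod (Measure.pi fun _ : Fin n => D)) := by
      intro F
      rw [← hmp.integral_comp']
      simp_rw [MeasurableEquiv.piFinSuccAbove_symm_apply, Fin.insertNthEquiv,
        Fin.insertNth_zero']
      rfl
    have hcons : Measurable (fun z : X × (Fin n → X) =>
        (Fin.cons z.1 z.2 : Fin (n+1) → X)) := by
      refine measurable_pi_iff.2 fun i => ?_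
      refine Fin.cases ?_ (fun j => ?_) i
      · simpa using measurable_fst
      · simp only [Fin.cons_succ]; fun_prop
    have hF := hf.comp hcons
    set P := Measure.pi fun _ : Fin n => D with hP
    have hFx : ∀ x, Measurable fun ω : Fin n → X => f (Fin.cons x ω) := fun x =>
      hF.comp (measurable_const.prodMk measurable_id)
    set g : X → ℝ := fun x => ∫ ω, f (Fin.cons x ω) ∂P with hgdef
    have hg : Measurable g := (hF.stronglyMeasurable.integral_prod_right' (ν := P)).measurable
    have hgB : ∀ x, |g x| ≤ B := by
      intro x
      have := norm_integral_le_of_norm_le_const (μ := P) (f := fun ω => f (Fin.cons x ω)) (C := B)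
        (Filter.Eventually.of_forall fun ω => hB _)
      simpa using this
    have hgc : ∀ x y, g x - g y ≤ c := by
      intro x y
      rw [hgdef]
      simp only
      rw [← integral_sub (int_bdd P (hFx x) B fun _ => hB _) (int_bdd P (hFx y) B fun _ => hB _)]
      calc _ ≤ ∫ _, c ∂P := by
            refine integral_mono ((int_bdd P (hFx x) B fun _ => hB _).sub
              (int_bdd P (hFx y) B fun _ => hB _)) (integrable_const _) fun ω => ?_
            refine hc 0 _ _ fun j hj => ?_
            obtain ⟨k, rfl⟩ := Fin.exists_succ_eq.2 hj
            simp
        _ = c := by simp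
    have i1 : Integrable (fun z : X × (Fin n → X) => Real.exp (t * f (Fin.cons z.1 z.2)))
        (D.prod P) := int_exp_bdd _ hF B (fun _ => hB _) t
    have i2 : Integrable (fun z : X × (Fin n → X) => f (Fin.cons z.1 z.2))
        (D.prod P) := int_bdd _ hF B (fun _ => hB _)
    rw [key, key, integral_prod _ i1, integral_prod _ i2]
    calc _ ≤ ∫ x, Real.exp (n * (c ^ 2 * t ^ 2 / 8)) * Real.exp (t * g x) ∂D := by
          refine integral_mono i1.integral_prod_left ((int_exp_bdd D hg B hgB t).const_mul _)
            fun x => ?_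
          have := ih (fun ω => f (Fin.cons x ω)) (hFx x) (fun _ => hB _) (by
            intro i ω ω' h
            refine hc i.succ _ _ fun j hj => ?_
            induction j using Fin.cases with
            | zero => simp
            | succ j => simpa using h j (fun h => hj (by rw [h])))
          simp only
          rw [← Real.exp_add, add_comm (_ * _) (t * g x)]
          exact this
      _ ≤ Real.exp (n * (c ^ 2 * t ^ 2 / 8)) *
            Real.exp (t * ∫ x, g x ∂D + c ^ 2 * t ^ 2 / 8) := by
          rw [integral_const_mul]
          gcongr
          exact hoeff_aux D c g hg B hgB hgc t
      _ = _ := by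
          rw [← Real.exp_add]; congr 1; push_cast; ring

lemma mcd_tail {X : Type*} [MeasurableSpace X] (D : Measure X) [IsProbabilityMeasure D]
    (B ε : ℝ) (n : ℕ) (hn : 1 ≤ n) (hε : 0 ≤ ε)
    (f : (Fin n → X) → ℝ) (hf : Measurable f) (hB : ∀ ω, |f ω| ≤ B)
    (hc : ∀ (i : Fin n) (ω ω' : Fin n → X), (∀ j, j ≠ i → ω j = ω' j) → f ω - f ω' ≤ 3 / n)
    (hmean : ∫ ω, f ω ∂(Measure.pi fun _ : Fin n => D) ≤ 0) :
    (Measure.pi fun _ : Fin n => D).real {ω | 3 * ε ≤ f ω} ≤ Real.exp (- (2 * n * ε ^ 2)) := by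
  have hn' : (0:ℝ) < n := by exact_mod_cast hn
  set t : ℝ := 4 * n * ε / 3 with ht
  have ht0 : 0 ≤ t := by positivity
  refine (ProbabilityTheory.measure_ge_le_exp_mul_mgf (3 * ε) ht0
    (int_exp_bdd _ hf B hB t)).trans ?_
  have h := mcd_mgf D (3 / n) B t n f hf hB hc
  calc _ ≤ Real.exp (-t * (3 * ε)) * Real.exp (n * ((3 / n : ℝ) ^ 2 * t ^ 2 / 8)) := by
        gcongr
        refine h.trans (Real.exp_le_exp.2 ?_)
        have := mul_nonneg_of_nonpos_of_nonpos hmean (neg_nonpos.2 ht0)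
        linarith
    _ = _ := by
        rw [← Real.exp_add, ht]; congr 1; field_simp; ring

lemma wsum_bound {n : ℕ} (hn : 1 ≤ n) (a : Fin n → ℝ) (C : ℝ) (ha : ∀ i, |a i| ≤ C) :
    |(1 / (n : ℝ)) * ∑ i, a i| ≤ C := by
  have hn' : (0:ℝ) < n := by exact_mod_cast hn
  rw [abs_mul, abs_of_pos (by positivity : 0 < 1 / (n:ℝ))]
  have : |∑ i, a i| ≤ n * C := by
    refine (Finset.abs_sum_le_sum_abs _ _).trans ?_
    calc _ ≤ ∑ _i : Fin n, C := Finset.sum_le_sum fun i _ => ha i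
      _ = _ := by simp
  calc _ ≤ 1 / (n:ℝ) * (n * C) := by gcongr
    _ = C := by field_simp

lemma bdd_of_abs {F : ℕ → ℝ} {B : ℝ} (h : ∀ k, |F k| ≤ B) : BddAbove (range F) :=
  ⟨B, by rintro _ ⟨k, rfl⟩; exact (abs_le.1 (h k)).2⟩

lemma abs_iSup_bd {F : ℕ → ℝ} {B : ℝ} (h : ∀ k, |F k| ≤ B) : |⨆ k, F k| ≤ B := by
  rw [abs_le]
  exact ⟨(abs_le.1 (h 0)).1.trans (le_ciSup (bdd_of_abs h) 0), ciSup_le fun k => (abs_le.1 (h k)).2⟩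

lemma iSup_sub_bd {F G : ℕ → ℝ} {B c : ℝ} (h : ∀ k, |G k| ≤ B) (hc : ∀ k, F k - G k ≤ c) :
    (⨆ k, F k) - (⨆ k, G k) ≤ c := by
  have : (⨆ k, F k) ≤ c + ⨆ k, G k := ciSup_le fun k => by
    linarith [hc k, le_ciSup (bdd_of_abs h) k]
  linarith

/-- The sign of a boolean. -/
noncomputable def sg (b : Bool) : ℝ := if b then (1 : ℝ) else -1

lemma sg_abs (b : Bool) : |sg b| = 1 := by cases b <;> simp [sg]

lemma sg_not (b : Bool) : sg (!b) = - sg b := by cases b <;> simp [sg]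

/-- Supremum of the signed empirical averages. -/
noncomputable def Rr {X : Type*} {n : ℕ} (h : ℕ → X → ℝ) (σ : Fin n → Bool) (ω : Fin n → X) : ℝ :=
  ⨆ k, (1 / (n : ℝ)) * ∑ i, sg (σ i) * h k (ω i)

/-- One-sided uniform deviation. -/
noncomputable def Aa {X : Type*} [MeasurableSpace X] {n : ℕ} (D : Measure X) (h : ℕ → X → ℝ)
    (s : Bool) (ω : Fin n → X) : ℝ :=
  ⨆ k, sg s * ((∫ x, h k x ∂D) - (1 / (n : ℝ)) * ∑ i, h k (ω i))

/-- Symmetrized deviation. -/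
noncomputable def Ww {X : Type*} {n : ℕ} (h : ℕ → X → ℝ) (b : Fin n → Bool)
    (z : (Fin n → X) × (Fin n → X)) : ℝ :=
  ⨆ k, (1 / (n : ℝ)) * ∑ i, sg (b i) * (h k (z.2 i) - h k (z.1 i))

section
variable {X : Type*} [MeasurableSpace X] (D : Measure X) [IsProbabilityMeasure D]
  (h : ℕ → X → ℝ) {n : ℕ}

lemma Rr_meas (hm : ∀ k, Measurable (h k)) (σ : Fin n → Bool) : Measurable (Rr h σ) := by
  unfold Rr
  refine Measurable.iSup fun k => ?_
  have := hm k
  fun_prop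

lemma Aa_meas (hm : ∀ k, Measurable (h k)) (s : Bool) :
    Measurable (Aa (n := n) D h s) := by
  unfold Aa
  refine Measurable.iSup fun k => ?_
  have := hm k
  fun_prop

lemma Ww_meas (hm : ∀ k, Measurable (h k)) (b : Fin n → Bool) : Measurable (Ww h b) := by
  unfold Ww
  refine Measurable.iSup fun k => ?_
  have := hm k
  fun_prop

lemma Rr_term (h01 : ∀ k x, 0 ≤ h k x ∧ h k x ≤ 1) (hn : 1 ≤ n) (σ : Fin n → Bool)
    (ω : Fin n → X) (k : ℕ) : |(1 / (n : ℝ)) * ∑ i, sg (σ i) * h k (ω i)| ≤ 1 := by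
  refine wsum_bound hn _ 1 fun i => ?_
  rw [abs_mul, sg_abs, one_mul, abs_le]
  constructor <;> linarith [h01 k (ω i)]

lemma Ww_term (h01 : ∀ k x, 0 ≤ h k x ∧ h k x ≤ 1) (hn : 1 ≤ n) (b : Fin n → Bool)
    (z : (Fin n → X) × (Fin n → X)) (k : ℕ) :
    |(1 / (n : ℝ)) * ∑ i, sg (b i) * (h k (z.2 i) - h k (z.1 i))| ≤ 1 := by
  refine wsum_bound hn _ 1 fun i => ?_
  rw [abs_mul, sg_abs, one_mul, abs_le]
  constructor <;> linarith [h01 k (z.1 i), h01 k (z.2 i)]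

lemma mean01 (hm : ∀ k, Measurable (h k)) (h01 : ∀ k x, 0 ≤ h k x ∧ h k x ≤ 1)
    (k : ℕ) : 0 ≤ ∫ x, h k x ∂D ∧ ∫ x, h k x ∂D ≤ 1 := by
  refine ⟨integral_nonneg fun x => (h01 k x).1, ?_⟩
  calc _ ≤ ∫ _x, (1:ℝ) ∂D := integral_mono
        (int_bdd D (hm k) 1 fun x => abs_le.2 ⟨by linarith [h01 k x], (h01 k x).2⟩)
        (integrable_const _) fun x => (h01 k x).2
    _ = 1 := by simp

lemma Aa_term (hm : ∀ k, Measurable (h k)) (h01 : ∀ k x, 0 ≤ h k x ∧ h k x ≤ 1) (hn : 1 ≤ n)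
    (s : Bool) (ω : Fin n → X) (k : ℕ) :
    |sg s * ((∫ x, h k x ∂D) - (1 / (n : ℝ)) * ∑ i, h k (ω i))| ≤ 2 := by
  rw [abs_mul, sg_abs, one_mul, abs_le]
  have h1 := mean01 D h hm h01 k
  have h2 := abs_le.1 (wsum_bound hn (fun i => h k (ω i)) 1 fun i => abs_le.2
    ⟨by linarith [h01 k (ω i)], (h01 k (ω i)).2⟩)
  constructor <;> linarith

lemma step1 (hm : ∀ k, Measurable (h k)) (h01 : ∀ k x, 0 ≤ h k x ∧ h k x ≤ 1) (hn : 1 ≤ n)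
    (s : Bool) : ∫ ω, Aa D h s ω ∂(Measure.pi fun _ : Fin n => D) ≤
    ∫ z, Ww h (fun _ => s) z ∂((Measure.pi fun _ : Fin n => D).prod
      (Measure.pi fun _ : Fin n => D)) := by
  set P := Measure.pi fun _ : Fin n => D with hP
  have iW : Integrable (Ww h (fun _ : Fin n => s)) (P.prod P) :=
    int_bdd _ (Ww_meas h hm _) 1 fun z => abs_iSup_bd (Ww_term h h01 hn _ z)
  rw [integral_prod _ iW]
  refine integral_mono (int_bdd _ (Aa_meas D h hm s) 2
    fun ω => abs_iSup_bd (Aa_term D h hm h01 hn s ω)) iW.integral_prod_left fun ω => ?_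
  refine ciSup_le fun k => ?_
  have ih : ∀ i, Integrable (fun ω' : Fin n → X => h k (ω' i)) P := fun i =>
    int_bdd P ((hm k).comp (measurable_pi_apply i)) 1 fun x => abs_le.2
      ⟨by linarith [h01 k (x i)], (h01 k (x i)).2⟩
  have hn' : (n:ℝ) ≠ 0 := by exact_mod_cast (by omega : n ≠ 0)
  have e : sg s * ((∫ x, h k x ∂D) - (1 / (n : ℝ)) * ∑ i, h k (ω i)) =
      ∫ ω', (1 / (n : ℝ)) * ∑ i, sg s * (h k (ω' i) - h k (ω i)) ∂P := by
    rw [integral_const_mul, integral_finsetSum]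
    swap
    · exact fun i _ => ((ih i).sub (integrable_const _)).const_mul _
    have : ∀ i, ∫ ω', sg s * (h k (ω' i) - h k (ω i)) ∂P =
        sg s * ((∫ x, h k x ∂D) - h k (ω i)) := by
      intro i
      rw [integral_const_mul, integral_sub (ih i) (integrable_const _)]
      rw [hP, integral_comp_eval (μ := fun _ : Fin n => D) (i := i) (f := h k)
        (hm k).aestronglyMeasurable]
      simp
    simp_rw [this]
    rw [← Finset.mul_sum, Finset.sum_sub_distrib]
    simp
    field_simp
  rw [e]
  refine integral_mono (int_bdd P (by have := hm k; fun_prop) 1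
    fun ω' => Ww_term h h01 hn (fun _ => s) (ω, ω') k) ?_ fun ω' => ?_
  · exact int_bdd _ ((Ww_meas h hm _).comp (measurable_const.prodMk measurable_id)) 1
      fun z => abs_iSup_bd (Ww_term h h01 hn _ (ω, z))
  · exact le_ciSup (bdd_of_abs (Ww_term h h01 hn (fun _ => s) (ω, ω'))) k

lemma step2 (hm : ∀ k, Measurable (h k))
    (s : Bool) (σ : Fin n → Bool) :
    ∫ z, Ww h (fun _ => s) z ∂((Measure.pi fun _ : Fin n => D).prod
      (Measure.pi fun _ : Fin n => D)) =
    ∫ z, Ww h σ z ∂((Measure.pi fun _ : Fin n => D).prod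
      (Measure.pi fun _ : Fin n => D)) := by
  have hE := measurePreserving_arrowProdEquivProdArrow X X (Fin n) (fun _ => D) (fun _ => D)
  have hT : MeasurePreserving
      (fun (z : Fin n → X × X) i => (if σ i = s then id else Prod.swap) (z i))
      (Measure.pi fun _ : Fin n => D.prod D) (Measure.pi fun _ : Fin n => D.prod D) := by
    refine measurePreserving_pi _ _ (f := fun i => if σ i = s then id else Prod.swap) fun i => ?_
    split_ifs
    · exact MeasurePreserving.id _
    · exact Measure.measurePreserving_swap
  rw [← hE.integral_comp', ← hE.integral_comp']
  conv_rhs => rw [← hT.map_eq]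
  have hWE : Measurable fun z : Fin n → X × X =>
      Ww h σ (MeasurableEquiv.arrowProdEquivProdArrow X X (Fin n) z) :=
    (Ww_meas h hm σ).comp hE.measurable
  rw [integral_map hT.aemeasurable hWE.aestronglyMeasurable]
  congr 1; ext z
  unfold Ww
  congr 1; ext k
  congr 1
  refine Finset.sum_congr rfl fun i _ => ?_
  simp only [MeasurableEquiv.arrowProdEquivProdArrow, MeasurableEquiv.coe_mk,
    Equiv.arrowProdEquivProdArrow, Equiv.coe_fn_mk]
  by_cases hs : σ i = s
  · simp [hs]
  · have : σ i = !s := by cases hh : σ i <;> cases s <;> simp_all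
    simp only [hs, if_false, Prod.fst_swap, Prod.snd_swap]
    rw [this, sg_not]; ring

lemma step3 (hm : ∀ k, Measurable (h k)) (h01 : ∀ k x, 0 ≤ h k x ∧ h k x ≤ 1) (hn : 1 ≤ n)
    (σ : Fin n → Bool) :
    ∫ z, Ww h σ z ∂((Measure.pi fun _ : Fin n => D).prod
      (Measure.pi fun _ : Fin n => D)) ≤
    ∫ ω, Rr h σ ω ∂(Measure.pi fun _ : Fin n => D) +
    ∫ ω, Rr h (fun i => !(σ i)) ω ∂(Measure.pi fun _ : Fin n => D) := by
  set P := Measure.pi fun _ : Fin n => D with hP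
  have iW : Integrable (Ww h σ) (P.prod P) :=
    int_bdd _ (Ww_meas h hm _) 1 fun z => abs_iSup_bd (Ww_term h h01 hn _ z)
  have i1 : Integrable (fun z : (Fin n → X) × (Fin n → X) => Rr h σ z.2) (P.prod P) :=
    int_bdd _ ((Rr_meas h hm _).comp measurable_snd) 1
      fun z => abs_iSup_bd (Rr_term h h01 hn _ z.2)
  have i2 : Integrable (fun z : (Fin n → X) × (Fin n → X) => Rr h (fun i => !(σ i)) z.1)
      (P.prod P) :=
    int_bdd _ ((Rr_meas h hm _).comp measurable_fst) 1
      fun z => abs_iSup_bd (Rr_term h h01 hn _ z.1)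
  calc _ ≤ ∫ z, (Rr h σ z.2 + Rr h (fun i => !(σ i)) z.1) ∂(P.prod P) := by
        refine integral_mono iW (i1.add i2) fun z => ciSup_le fun k => ?_
        have a1 := le_ciSup (bdd_of_abs (Rr_term h h01 hn σ z.2)) k
        have a2 := le_ciSup (bdd_of_abs (Rr_term h h01 hn (fun i => !(σ i)) z.1)) k
        refine le_trans (le_of_eq ?_) (add_le_add a1 a2)
        rw [← mul_add, ← Finset.sum_add_distrib]
        congr 1
        refine Finset.sum_congr rfl fun i _ => ?_
        rw [sg_not]; ring
    _ = _ := by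
        rw [integral_add i1 i2, integral_prod _ i1, integral_prod _ i2]
        simp

/-- Rademacher complexity. -/
noncomputable def rad (h : ℕ → X → ℝ) (ω : Fin n → X) : ℝ :=
  (∑ σ : Fin n → Bool, Rr h σ ω) / 2 ^ n

lemma card_bool (n : ℕ) (c : ℝ) : ∑ _σ : Fin n → Bool, c = 2 ^ n * c := by
  simp

lemma mean_le (hm : ∀ k, Measurable (h k)) (h01 : ∀ k x, 0 ≤ h k x ∧ h k x ≤ 1) (hn : 1 ≤ n)
    (s : Bool) :
    ∫ ω, (Aa D h s ω - 2 * rad h ω) ∂(Measure.pi fun _ : Fin n => D) ≤ 0 := by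
  set P := Measure.pi fun _ : Fin n => D with hP
  have iR : ∀ σ : Fin n → Bool, Integrable (Rr h σ) P := fun σ =>
    int_bdd _ (Rr_meas h hm _) 1 fun z => abs_iSup_bd (Rr_term h h01 hn _ z)
  have iA : Integrable (Aa (n := n) D h s) P := int_bdd _ (Aa_meas D h hm s) 2
    fun ω => abs_iSup_bd (Aa_term D h hm h01 hn s ω)
  have irad : Integrable (rad (n := n) h) P := by
    unfold rad
    exact (integrable_finsetSum _ fun σ _ => iR σ).div_const _
  rw [integral_sub iA (irad.const_mul 2), integral_const_mul]
  have e : ∫ ω, rad h ω ∂P = (∑ σ : Fin n → Bool, ∫ ω, Rr h σ ω ∂P) / 2 ^ n := by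
    unfold rad
    rw [integral_div, integral_finsetSum _ fun σ _ => iR σ]
  have hk : ∀ σ : Fin n → Bool, ∫ ω, Aa D h s ω ∂P ≤
      ∫ ω, Rr h σ ω ∂P + ∫ ω, Rr h (fun i => !(σ i)) ω ∂P := fun σ =>
    (step1 D h hm h01 hn s).trans ((step2 D h hm s σ).le.trans (step3 D h hm h01 hn σ))
  have hsum := Finset.sum_le_sum (s := Finset.univ) fun σ _ => hk σ
  rw [card_bool, Finset.sum_add_distrib] at hsum
  have hinv : Function.Involutive (fun (σ : Fin n → Bool) i => !(σ i)) := fun σ => by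
    ext i; simp
  have e2 := Equiv.sum_comp hinv.toPerm (fun σ => ∫ ω, Rr h σ ω ∂P)
  simp only [Function.Involutive.coe_toPerm] at e2
  rw [e2] at hsum
  rw [e]
  have hp : (0:ℝ) < 2 ^ n := by positivity
  have : ∫ ω, Aa D h s ω ∂P ≤ 2 * ((∑ σ : Fin n → Bool, ∫ ω, Rr h σ ω ∂P) / 2 ^ n) := by
    rw [← mul_div_assoc, le_div_iff₀ hp]; linarith
  linarith

lemma diff_term (h01 : ∀ k x, 0 ≤ h k x ∧ h k x ≤ 1) (b : Fin n → Bool)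
    (i : Fin n) (ω ω' : Fin n → X) (hω : ∀ j, j ≠ i → ω j = ω' j) (k : ℕ) :
    (1 / (n : ℝ)) * ∑ j, sg (b j) * h k (ω j) - (1 / (n : ℝ)) * ∑ j, sg (b j) * h k (ω' j)
      ≤ 1 / n := by
  rw [← mul_sub, ← Finset.sum_sub_distrib, Finset.sum_eq_single i]
  · have : sg (b i) * h k (ω i) - sg (b i) * h k (ω' i) ≤ 1 := by
      rw [← mul_sub]
      refine (le_abs_self _).trans ?_
      rw [abs_mul, sg_abs, one_mul, abs_le]
      constructor <;> linarith [h01 k (ω i), h01 k (ω' i)]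
    calc _ ≤ 1 / (n:ℝ) * 1 := by gcongr
      _ = _ := mul_one _
  · intro j _ hj; rw [hω j hj]; ring
  · simp

lemma bdd_diff (hm : ∀ k, Measurable (h k)) (h01 : ∀ k x, 0 ≤ h k x ∧ h k x ≤ 1) (hn : 1 ≤ n)
    (s : Bool) (i : Fin n) (ω ω' : Fin n → X) (hω : ∀ j, j ≠ i → ω j = ω' j) :
    (Aa D h s ω - 2 * rad h ω) - (Aa D h s ω' - 2 * rad h ω') ≤ 3 / n := by
  have hA : Aa D h s ω - Aa D h s ω' ≤ 1 / n := by
    refine iSup_sub_bd (Aa_term D h hm h01 hn s ω') fun k => ?_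
    have := diff_term h h01 (fun _ => !s) i ω ω' hω k
    simp only [← Finset.mul_sum, sg_not] at this
    linarith
  have hR : rad h ω' - rad h ω ≤ 1 / n := by
    have : ∀ σ : Fin n → Bool, Rr h σ ω' - Rr h σ ω ≤ 1 / n := fun σ =>
      iSup_sub_bd (Rr_term h h01 hn σ ω) fun k =>
        diff_term h h01 σ i ω' ω (fun j hj => (hω j hj).symm) k
    have hs := Finset.sum_le_sum (s := Finset.univ) fun σ _ => this σ
    rw [card_bool, Finset.sum_sub_distrib] at hs
    unfold rad
    rw [← sub_div, div_le_iff₀ (by positivity)]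
    linarith
  have : (3:ℝ) / n = 1 / n + 2 * (1 / n) := by ring
  linarith

lemma tailG (hm : ∀ k, Measurable (h k)) (h01 : ∀ k x, 0 ≤ h k x ∧ h k x ≤ 1) (hn : 1 ≤ n)
    (s : Bool) (ε : ℝ) (hε : 0 ≤ ε) :
    (Measure.pi fun _ : Fin n => D).real {ω | 3 * ε ≤ Aa D h s ω - 2 * rad h ω}
      ≤ Real.exp (- (2 * n * ε ^ 2)) := by
  refine mcd_tail D 4 ε n hn hε _ ?_ ?_ (bdd_diff D h hm h01 hn s) (mean_le D h hm h01 hn s)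
  · have := Aa_meas (n := n) D h hm s
    have h2 : Measurable (rad (n := n) h) := by
      unfold rad
      exact (Finset.measurable_sum _ fun σ _ => Rr_meas h hm σ).div_const _
    fun_prop
  · intro ω
    have a := abs_le.1 (abs_iSup_bd (Aa_term D h hm h01 hn s ω))
    have b : |rad h ω| ≤ 1 := by
      unfold rad
      rw [abs_div, abs_of_pos (by positivity : (0:ℝ) < 2 ^ n), div_le_iff₀ (by positivity)]
      refine (Finset.abs_sum_le_sum_abs _ _).trans ?_
      rw [mul_comm, ← card_bool]
      exact Finset.sum_le_sum fun σ _ => abs_iSup_bd (Rr_term h h01 hn σ ω)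
    have b := abs_le.1 b
    have a' : -2 ≤ Aa D h s ω ∧ Aa D h s ω ≤ 2 := a
    rw [abs_le]
    constructor <;> linarith

end

theorem stmt_17 {X : Type*} [MeasurableSpace X]
    (D : Measure X) [IsProbabilityMeasure D]
    (Ht : Set (X → ℝ)) (hHcount : Ht.Countable) (hHne : Ht.Nonempty)
    (hmeas : ∀ h ∈ Ht, Measurable h)
    (hrange : ∀ h ∈ Ht, ∀ x, h x = 0 ∨ h x = 1)
    (n : ℕ) (hn : 1 ≤ n) (δ : ℝ) (hδ : δ ∈ Ioo (0 : ℝ) 1) :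
    ENNReal.ofReal (1 - δ) ≤
      (Measure.pi fun _ : Fin n => D)
        {ω | dH Ht D (empD ω) ≤
          2 * radS ω Ht + 3 * Real.sqrt (Real.log (2 / δ) / (2 * n))} := by
  obtain ⟨h, rfl⟩ := hHcount.exists_eq_range hHne
  have hm : ∀ k, Measurable (h k) := fun k => hmeas _ ⟨k, rfl⟩
  have hr : ∀ k x, h k x = 0 ∨ h k x = 1 := fun k => hrange _ ⟨k, rfl⟩
  have h01 : ∀ k x, 0 ≤ h k x ∧ h k x ≤ 1 := fun k x => by
    rcases hr k x with e | e <;> rw [e] <;> norm_num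
  have hn' : (0:ℝ) < n := by exact_mod_cast hn
  set ε := Real.sqrt (Real.log (2 / δ) / (2 * n)) with hεd
  have hε : 0 ≤ ε := Real.sqrt_nonneg _
  have hlog : 0 ≤ Real.log (2 / δ) :=
    Real.log_nonneg (by rw [le_div_iff₀ hδ.1]; linarith [hδ.2])
  have hexp : Real.exp (- (2 * n * ε ^ 2)) = δ / 2 := by
    rw [hεd, Real.sq_sqrt (by positivity)]
    have : 2 * (n:ℝ) * (Real.log (2 / δ) / (2 * n)) = Real.log (2 / δ) := by field_simp
    rw [this, Real.exp_neg, Real.exp_log (by have := hδ.1; positivity), inv_div]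
  set P := Measure.pi fun _ : Fin n => D with hP
  have hind : ∀ k, h k = ({x | h k x = 1} : Set X).indicator (fun _ => (1:ℝ)) := by
    intro k; ext x
    rcases hr k x with e | e <;> simp [Set.indicator, e]
  have hms : ∀ k, MeasurableSet {x | h k x = 1} := fun k => hm k (measurableSet_singleton 1)
  have hD : ∀ k, (D {x | h k x = 1}).toReal = ∫ x, h k x ∂D := by
    intro k
    conv_rhs => rw [hind k]
    rw [integral_indicator (hms k)]
    simp [Measure.real]
  have hE : ∀ k (ω : Fin n → X), (empD ω {x | h k x = 1}).toReal =
      (1 / (n:ℝ)) * ∑ i, h k (ω i) := by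
    intro k ω
    unfold empD
    rw [Measure.smul_apply, Measure.finsetSum_apply, smul_eq_mul, ENNReal.toReal_mul,
      ENNReal.toReal_inv, ENNReal.toReal_natCast, one_div, ENNReal.toReal_sum]
    · congr 1
      refine Finset.sum_congr rfl fun i _ => ?_
      rw [Measure.dirac_apply' _ (hms k)]
      rcases hr k (ω i) with e | e <;> simp [Set.indicator, e]
    · intro i _; exact measure_ne_top _ _
  have hrad : ∀ ω : Fin n → X, radS ω (range h) = rad h ω := by
    intro ω
    unfold radS rad Rr
    simp only [← Set.range_comp]
    rfl
  have hsub : ∀ ω : Fin n → X, ¬ (3 * ε ≤ Aa D h true ω - 2 * rad h ω) →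
      ¬ (3 * ε ≤ Aa D h false ω - 2 * rad h ω) →
      dH (range h) D (empD ω) ≤ 2 * radS ω (range h) + 3 * ε := by
    intro ω h1 h2
    rw [hrad]
    unfold dH
    refine csSup_le (hHne.image _) ?_
    rintro _ ⟨_, ⟨k, rfl⟩, rfl⟩
    simp only [hD, hE]
    have a1 := le_ciSup (bdd_of_abs (Aa_term D h hm h01 hn true ω)) k
    have a2 := le_ciSup (bdd_of_abs (Aa_term D h hm h01 hn false ω)) k
    change _ ≤ Aa D h true ω at a1
    change _ ≤ Aa D h false ω at a2
    simp only [sg] at a1 a2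
    norm_num at a1 a2
    push Not at h1 h2
    rw [abs_le]
    constructor <;> norm_num <;> linarith
  set U := {ω | 3 * ε ≤ Aa D h true ω - 2 * rad h ω} with hU
  set V := {ω | 3 * ε ≤ Aa D h false ω - 2 * rad h ω} with hV
  have hUb : P.real U ≤ δ / 2 := hexp ▸ tailG D h hm h01 hn true ε hε
  have hVb : P.real V ≤ δ / 2 := hexp ▸ tailG D h hm h01 hn false ε hε
  have hUV : P.real (U ∪ V) ≤ δ := by
    linarith [measureReal_union_le (μ := P) U V]
  have h1 : (1:ℝ) ≤ P.real (U ∪ V) + P.real (U ∪ V)ᶜ := by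
    have := measureReal_union_le (μ := P) (U ∪ V) (U ∪ V)ᶜ
    rw [Set.union_compl_self] at this
    simpa using this
  calc ENNReal.ofReal (1 - δ) ≤ ENNReal.ofReal (P.real (U ∪ V)ᶜ) :=
        ENNReal.ofReal_le_ofReal (by linarith)
    _ = P (U ∪ V)ᶜ := ofReal_measureReal
    _ ≤ _ := measure_mono fun ω hω => by
        simp only [Set.mem_compl_iff, Set.mem_union, not_or] at hω
        exact hsub ω hω.1 hω.2
end
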